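/- Let G be a finite simple graph, Z a cycle in G, λ : E(G) → ℤ/2 an edge labeling, and B a bridge of G with respect to Z that is not a single edge; let v ∈ V(B) \ V(Z) be a reference vertex, and for u ∈ V(B) ∩ V(Z) let L_v(u) = { λ(ω) : ω a proper walk in B from u to v } ⊆ ℤ/2. Suppose there is a vertex x ∈ V(B) ∩ V(Z) with |L_v(x)| = 1. Then there exists a set U ⊆ V(B) \ V(Z) such that the labeling λ′ defined on the edges of B by λ′(e) = λ(e) + (number of endpoints of e lying in U) (mod 2) satisfies: λ′(e) = 0 for every edge e of B having no endpoint on Z, and λ′(e) ∈ L_v(u) for every edge e of B having an endpoint u ∈ V(Z). -/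

import Mathlib

open SimpleGraph

variable {V : Type*}

/-- The `λ`-value of a walk: the sum in `ℤ/2`, over the edges of the walk counted with
multiplicity, of their labels. -/
def walkLambda (lam : Sym2 V → ZMod 2) {G : SimpleGraph V} {x y : V} (w : G.Walk x y) :
    ZMod 2 :=
  (w.edges.map lam).sum

/-- `b` can be reached from `a` by a walk in `G` all of whose vertices avoid `Zv`. -/
def ReachAvoiding (G : SimpleGraph V) (Zv : Set V) (a b : V) : Prop :=
  ∃ w : G.Walk a b, ∀ x ∈ w.support, x ∉ Zv

/-- `B` is a bridge of `G` with respect to a cycle with vertex set `Zv` and edge set `Ze`: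
either a single edge not of the cycle together with its two endpoints, both on the cycle,
or a connected component of `G − Zv` together with all edges (and their endpoints on the
cycle) joining it to `Zv`. -/
def IsBridgeOf (G : SimpleGraph V) (Zv : Set V) (Ze : Set (Sym2 V)) (B : G.Subgraph) :
    Prop :=
  (∃ u v, G.Adj u v ∧ s(u, v) ∉ Ze ∧ u ∈ Zv ∧ v ∈ Zv ∧
      B.verts = {u, v} ∧ ∀ a b, B.Adj a b ↔ s(a, b) = s(u, v)) ∨
  (∃ a, a ∉ Zv ∧
      B.verts = {b | ReachAvoiding G Zv a b} ∪
        {z | z ∈ Zv ∧ ∃ c, ReachAvoiding G Zv a c ∧ G.Adj c z} ∧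
      ∀ x y, B.Adj x y ↔
        G.Adj x y ∧ (ReachAvoiding G Zv a x ∨ ReachAvoiding G Zv a y))

/-- `w` is a proper walk lying in the subgraph `B`, with respect to a cycle with vertex
set `Zv` and edge set `Ze`: the walk lies in `B`, none of its vertices lies on the cycle
except possibly its endpoints, and none of its edges is an edge of the cycle. -/
def IsProperWalkIn {G : SimpleGraph V} (B : G.Subgraph) (Zv : Set V) (Ze : Set (Sym2 V))
    {x y : V} (w : G.Walk x y) : Prop :=
  (∀ u ∈ w.support, u ∈ B.verts) ∧ (∀ e ∈ w.edges, e ∈ B.edgeSet) ∧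
    (∀ u ∈ w.support, u ∈ Zv → u = x ∨ u = y) ∧ (∀ e ∈ w.edges, e ∉ Ze)

/-- The set of `λ`-values of proper walks in `B` from `x` to the reference vertex `w`. -/
def labelSet {G : SimpleGraph V} (B : G.Subgraph) (Zv : Set V) (Ze : Set (Sym2 V))
    (lam : Sym2 V → ZMod 2) (x w : V) : Set (ZMod 2) :=
  {t | ∃ ω : G.Walk x w, IsProperWalkIn B Zv Ze ω ∧ walkLambda lam ω = t}

/-- A graph is 2-connected: it has at least three vertices, it is connected, and it
remains connected after the deletion of any single vertex. -/
def TwoConnected (G : SimpleGraph V) : Prop :=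
  3 ≤ Nat.card V ∧ G.Connected ∧ ∀ v : V, (G.induce {u | u ≠ v}).Connected

/-!
Fix an edge of `B` from `x` to some `d ∉ Z` and a walk off `Z` from `d` to `c`. Followed by any walk
off `Z` from `c` to `v` they form a proper walk from `x` to `v`, whose value is prescribed by
`|L_v(x)| = 1`. So the value of a walk off `Z` from `c` to `v` depends on `c` only; let `U` be the
set of those `c` for which it is `1`. Switching at `U` changes the label of an edge `ab` with
`b ∉ Z` into the value of a closed walk at `v` off `Z`, hence `0`, if `a ∉ Z`, and into the value
of a proper walk from `a` to `v` if `a ∈ Z`.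
-/

section WalkLambda

variable {G : SimpleGraph V} (lam : Sym2 V → ZMod 2) {a b c : V}

theorem walkLambda_cons (h : G.Adj a b) (p : G.Walk b c) :
    walkLambda lam (.cons h p) = lam s(a, b) + walkLambda lam p := by
  simp [walkLambda]

theorem walkLambda_append (p : G.Walk a b) (q : G.Walk b c) :
    walkLambda lam (p.append q) = walkLambda lam p + walkLambda lam q := by
  simp [walkLambda]

end WalkLambda

/-- The walk `w` has no vertex in `S`, that is, it is a walk in `G − S`. -/
def WalkAvoids {G : SimpleGraph V} (S : Set V) {a b : V} (w : G.Walk a b) : Prop :=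
  ∀ y ∈ w.support, y ∉ S

section Avoiding

variable {G : SimpleGraph V} {S : Set V} {a b c : V}

theorem walkAvoids_cons {h : G.Adj a b} {p : G.Walk b c} :
    WalkAvoids S (.cons h p) ↔ a ∉ S ∧ WalkAvoids S p := by
  simp [WalkAvoids]

theorem WalkAvoids.append {p : G.Walk a b} {q : G.Walk b c} (hp : WalkAvoids S p)
    (hq : WalkAvoids S q) : WalkAvoids S (p.append q) := fun y hy =>
  ((Walk.mem_support_append_iff p q).1 hy).elim (hp y) (hq y)

theorem WalkAvoids.reverse {p : G.Walk a b} (hp : WalkAvoids S p) :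
    WalkAvoids S p.reverse := fun y hy =>
  hp y (by simpa using hy)

theorem WalkAvoids.start_notMem {p : G.Walk a b} (hp : WalkAvoids S p) : a ∉ S :=
  hp a p.start_mem_support

theorem ReachAvoiding.symm (h : ReachAvoiding G S a b) : ReachAvoiding G S b a :=
  let ⟨p, hp⟩ := h
  ⟨p.reverse, WalkAvoids.reverse hp⟩

theorem ReachAvoiding.trans (hab : ReachAvoiding G S a b) (hbc : ReachAvoiding G S b c) :
    ReachAvoiding G S a c :=
  let ⟨p, hp⟩ := hab
  let ⟨q, hq⟩ := hbc
  ⟨p.append q, WalkAvoids.append hp hq⟩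

theorem ReachAvoiding.right_notMem (h : ReachAvoiding G S a b) : b ∉ S :=
  let ⟨p, hp⟩ := h
  hp b p.end_mem_support

theorem reachAvoiding_refl (ha : a ∉ S) : ReachAvoiding G S a a :=
  ⟨.nil, by simpa using ha⟩

end Avoiding

/-- The component of `v` in `G − S` is balanced in the sense of signed graphs, stated through its
reference vertex: walks in `G − S` to `v` with the same start have the same `λ`-value. -/
def IsBalancedAt (G : SimpleGraph V) (lam : Sym2 V → ZMod 2) (S : Set V) (v : V) : Prop :=
  ∀ ⦃c : V⦄ (p q : G.Walk c v), WalkAvoids S p → WalkAvoids S q →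
    walkLambda lam p = walkLambda lam q

/-- The vertices joined to `v` by a walk of `λ`-value `1` in `G − S`; switching at this set makes a
balanced labeling vanish on the component of `v`. -/
def switchingSet (G : SimpleGraph V) (lam : Sym2 V → ZMod 2) (S : Set V) (v : V) : Set V :=
  {c | ∃ p : G.Walk c v, WalkAvoids S p ∧ walkLambda lam p = 1}

section Switching

variable {G : SimpleGraph V} {lam : Sym2 V → ZMod 2} {S : Set V} {a b v : V}

theorem notMem_switchingSet (ha : a ∈ S) : a ∉ switchingSet G lam S v :=
  fun ⟨_, hp, _⟩ => hp.start_notMem ha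

theorem IsBalancedAt.indicator_switchingSet (h : IsBalancedAt G lam S v) {p : G.Walk a v}
    (hp : WalkAvoids S p) : (switchingSet G lam S v).indicator 1 a = walkLambda lam p := by
  by_cases ha : a ∈ switchingSet G lam S v
  · rw [Set.indicator_of_mem ha, Pi.one_apply]
    obtain ⟨q, hq, hq_one⟩ := ha
    exact hq_one.symm.trans (h q p hq hp)
  · rw [Set.indicator_of_notMem ha]
    by_contra hp_ne
    exact ha ⟨p, hp, Fin.eq_one_of_ne_zero _ (Ne.symm hp_ne)⟩

theorem IsBalancedAt.switched_eq_zero (h : IsBalancedAt G lam S v) (hab : G.Adj a b) (ha : a ∉ S)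
    (hbv : ReachAvoiding G S b v) :
    lam s(a, b) + (switchingSet G lam S v).indicator 1 a +
      (switchingSet G lam S v).indicator 1 b = 0 := by
  obtain ⟨p, hp⟩ := hbv
  rw [h.indicator_switchingSet (walkAvoids_cons.2 ⟨ha, hp⟩ : WalkAvoids S (.cons hab p)),
    h.indicator_switchingSet hp, walkLambda_cons, ← add_assoc,
    CharTwo.add_self_eq_zero, zero_add, CharTwo.add_self_eq_zero]

end Switching

namespace IsBridgeOf

section Structure

variable {G : SimpleGraph V} {Zv : Set V} {Ze : Set (Sym2 V)} {B : G.Subgraph} {a b v x : V}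

theorem verts_eq_and_adj_iff (hB : IsBridgeOf G Zv Ze B) (hvB : v ∈ B.verts) (hvZ : v ∉ Zv) :
    B.verts = {b | ReachAvoiding G Zv v b} ∪
        {z | z ∈ Zv ∧ ∃ c, ReachAvoiding G Zv v c ∧ G.Adj c z} ∧
      ∀ x y, B.Adj x y ↔ G.Adj x y ∧ (ReachAvoiding G Zv v x ∨ ReachAvoiding G Zv v y) := by
  rcases hB with ⟨p, q, -, -, hp, hq, hverts, -⟩ | ⟨r, -, hverts, hadj⟩
  · rw [hverts] at hvB
    rcases hvB with rfl | rfl <;> contradiction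
  · have hrv : ReachAvoiding G Zv r v := by
      rw [hverts] at hvB
      exact hvB.resolve_right fun h => hvZ h.1
    have hreach : ReachAvoiding G Zv r = ReachAvoiding G Zv v :=
      funext fun c => propext ⟨hrv.symm.trans, hrv.trans⟩
    exact hreach ▸ ⟨hverts, hadj⟩

theorem reachAvoiding (hB : IsBridgeOf G Zv Ze B) (haB : a ∈ B.verts) (haZ : a ∉ Zv)
    (hbB : b ∈ B.verts) (hbZ : b ∉ Zv) : ReachAvoiding G Zv a b := by
  rw [(hB.verts_eq_and_adj_iff haB haZ).1] at hbB
  exact hbB.resolve_right fun h => hbZ h.1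

theorem adj_of_mem_verts (hB : IsBridgeOf G Zv Ze B) (haB : a ∈ B.verts) (haZ : a ∉ Zv)
    (hab : G.Adj a b) : B.Adj a b :=
  ((hB.verts_eq_and_adj_iff haB haZ).2 a b).2 ⟨hab, .inl (reachAvoiding_refl haZ)⟩

theorem exists_adj_notMem (hB : IsBridgeOf G Zv Ze B) (hvB : v ∈ B.verts) (hvZ : v ∉ Zv)
    (hxB : x ∈ B.verts) (hxZ : x ∈ Zv) : ∃ c, B.Adj x c ∧ c ∉ Zv := by
  obtain ⟨hverts, hadj⟩ := hB.verts_eq_and_adj_iff hvB hvZ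
  rw [hverts] at hxB
  obtain ⟨-, c, hvc, hcx⟩ := hxB.resolve_left fun hvx => hvx.right_notMem hxZ
  exact ⟨c, (hadj x c).2 ⟨hcx.symm, .inr hvc⟩, hvc.right_notMem⟩

theorem notMem_of_adj (hB : IsBridgeOf G Zv Ze B) (hvB : v ∈ B.verts) (hvZ : v ∉ Zv)
    (hab : B.Adj a b) (haZ : a ∈ Zv) : b ∉ Zv :=
  (((hB.verts_eq_and_adj_iff hvB hvZ).2 a b).1 hab).2.elim
    (fun hva => absurd haZ hva.right_notMem) (·.right_notMem)

theorem toSubgraph_le (hB : IsBridgeOf G Zv Ze B) {p : G.Walk a b} (haB : a ∈ B.verts)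
    (hp : WalkAvoids Zv p) : p.toSubgraph ≤ B := by
  induction p with
  | nil => simpa using haB
  | cons h p ih =>
    obtain ⟨haZ, hp⟩ := walkAvoids_cons.1 hp
    have hadj := hB.adj_of_mem_verts haB haZ h
    exact sup_le (subgraphOfAdj_le_of_adj B hadj) (ih (B.edge_vert hadj.symm) hp)

theorem switchingSet_subset (hB : IsBridgeOf G Zv Ze B) (hvB : v ∈ B.verts)
    (lam : Sym2 V → ZMod 2) : switchingSet G lam Zv v ⊆ B.verts \ Zv := by
  rintro c ⟨p, hp, -⟩
  exact ⟨(hB.toSubgraph_le hvB hp.reverse).1 (by simp), hp.start_notMem⟩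

end Structure

section LabelSet

variable {G : SimpleGraph V} {Z B : G.Subgraph} {lam : Sym2 V → ZMod 2} {a b v x : V}

theorem isProperWalkIn_cons (hB : IsBridgeOf G Z.verts Z.edgeSet B) (hab : B.Adj a b)
    {p : G.Walk b v} (hp : WalkAvoids Z.verts p) :
    IsProperWalkIn B Z.verts Z.edgeSet (.cons hab.adj_sub p) := by
  have hle : (Walk.cons hab.adj_sub p).toSubgraph ≤ B :=
    sup_le (subgraphOfAdj_le_of_adj B hab) (hB.toSubgraph_le (B.edge_vert hab.symm) hp)
  refine ⟨fun u hu => hle.1 ((Walk.mem_verts_toSubgraph _).2 hu),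
    fun e he => Subgraph.edgeSet_mono hle ((Walk.mem_edges_toSubgraph _).2 he), ?_, ?_⟩
  · intro u hu huZ
    rw [Walk.support_cons, List.mem_cons] at hu
    exact .inl (hu.resolve_right fun hup => hp u hup huZ)
  · intro e he heZ
    rw [Walk.edges_cons, List.mem_cons] at he
    rcases he with rfl | he
    · exact hp.start_notMem (Z.edge_vert (Subgraph.Adj.symm heZ))
    · induction e with
      | _ c d => exact hp c (p.fst_mem_support_of_mem_edges he) (Z.edge_vert heZ)

theorem add_walkLambda_mem_labelSet (hB : IsBridgeOf G Z.verts Z.edgeSet B) (hab : B.Adj a b)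
    {p : G.Walk b v} (hp : WalkAvoids Z.verts p) :
    lam s(a, b) + walkLambda lam p ∈ labelSet B Z.verts Z.edgeSet lam a v :=
  ⟨.cons hab.adj_sub p, hB.isProperWalkIn_cons hab hp, walkLambda_cons lam hab.adj_sub p⟩

theorem isBalancedAt (hB : IsBridgeOf G Z.verts Z.edgeSet B) (hvB : v ∈ B.verts)
    (hvZ : v ∉ Z.verts) (hxB : x ∈ B.verts) (hxZ : x ∈ Z.verts)
    (hL : (labelSet B Z.verts Z.edgeSet lam x v).Subsingleton) :
    IsBalancedAt G lam Z.verts v := by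
  intro c p q hp hq
  obtain ⟨d, hxd, hdZ⟩ := hB.exists_adj_notMem hvB hvZ hxB hxZ
  have hdv := hB.reachAvoiding (B.edge_vert hxd.symm) hdZ hvB hvZ
  obtain ⟨r, hr⟩ : ReachAvoiding G Z.verts d c := hdv.trans (ReachAvoiding.symm ⟨p, hp⟩)
  have hmem {w : G.Walk c v} (hw : WalkAvoids Z.verts w) :
      lam s(x, d) + (walkLambda lam r + walkLambda lam w) ∈
        labelSet B Z.verts Z.edgeSet lam x v := by
    rw [← walkLambda_append]
    exact hB.add_walkLambda_mem_labelSet hxd (WalkAvoids.append hr hw)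
  exact add_left_cancel (add_left_cancel (hL (hmem hp) (hmem hq)))

end LabelSet

end IsBridgeOf

theorem statement9_general (G : SimpleGraph V) (lam : Sym2 V → ZMod 2) (Z B : G.Subgraph)
    (hB : IsBridgeOf G Z.verts Z.edgeSet B) (v : V) (hvB : v ∈ B.verts) (hvZ : v ∉ Z.verts)
    (x : V) (hxB : x ∈ B.verts) (hxZ : x ∈ Z.verts)
    (hL : (labelSet B Z.verts Z.edgeSet lam x v).Subsingleton) :
    ∃ U ⊆ B.verts \ Z.verts,
      (∀ a b : V, B.Adj a b → a ∉ Z.verts → b ∉ Z.verts →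
        lam s(a, b) + U.indicator 1 a + U.indicator 1 b = 0) ∧
      (∀ a b : V, B.Adj a b → a ∈ Z.verts →
        lam s(a, b) + U.indicator 1 a + U.indicator 1 b ∈
          labelSet B Z.verts Z.edgeSet lam a v) := by
  have hbal := hB.isBalancedAt hvB hvZ hxB hxZ hL
  have hreach {a b : V} (hab : B.Adj a b) (hbZ : b ∉ Z.verts) : ReachAvoiding G Z.verts b v :=
    hB.reachAvoiding (B.edge_vert hab.symm) hbZ hvB hvZ
  refine ⟨switchingSet G lam Z.verts v, hB.switchingSet_subset hvB lam, ?_, ?_⟩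
  · intro a b hab haZ hbZ
    exact hbal.switched_eq_zero hab.adj_sub haZ (hreach hab hbZ)
  · intro a b hab haZ
    obtain ⟨p, hp⟩ := hreach hab (hB.notMem_of_adj hvB hvZ hab haZ)
    rw [Set.indicator_of_notMem (notMem_switchingSet haZ), add_zero,
      hbal.indicator_switchingSet hp]
    exact hB.add_walkLambda_mem_labelSet hab hp

/-- Let `B` be a bridge that is not a single edge, with reference vertex
`v ∈ V(B) \ V(Z)`, and suppose some `x ∈ V(B) ∩ V(Z)` has `|L_v(x)| = 1`. Then there is
a set `U ⊆ V(B) \ V(Z)` such that the labeling `λ′`, obtained from `λ` by adding the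
number of endpoints in `U` (mod 2) to each edge of `B`, vanishes on every edge of `B`
with no endpoint on `Z` and satisfies `λ′(e) ∈ L_v(u)` for every edge `e` of `B` with an
endpoint `u ∈ V(Z)`. -/
theorem statement9 [Fintype V] [DecidableEq V] (G : SimpleGraph V)
    (lam : Sym2 V → ZMod 2)
    (z₀ : V) (Z : G.Walk z₀ z₀) (hZ : Z.IsCycle) (B : G.Subgraph)
    (hB : IsBridgeOf G {u | u ∈ Z.support} {e | e ∈ Z.edges} B)
    (hBedge : ¬ ∃ u w : V, B.edgeSet = {s(u, w)} ∧ B.verts = {u, w})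
    (v : V) (hvB : v ∈ B.verts) (hvZ : v ∉ Z.support)
    (x : V) (hxB : x ∈ B.verts) (hxZ : x ∈ Z.support)
    (hL : ∃ t, labelSet B {u | u ∈ Z.support} {e | e ∈ Z.edges} lam x v = {t}) :
    ∃ U : Finset V, (↑U : Set V) ⊆ B.verts \ {u | u ∈ Z.support} ∧
      (∀ a b : V, B.Adj a b → a ∉ Z.support → b ∉ Z.support →
        lam s(a, b) + (if a ∈ U then 1 else 0) + (if b ∈ U then 1 else 0) = 0) ∧
      (∀ a b : V, B.Adj a b → a ∈ Z.support →
        lam s(a, b) + (if a ∈ U then 1 else 0) + (if b ∈ U then 1 else 0) ∈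
          labelSet B {u | u ∈ Z.support} {e | e ∈ Z.edges} lam a v) := by
  classical
  obtain ⟨t, ht⟩ := hL
  have hgen := statement9_general G lam Z.toSubgraph B
  rw [Walk.verts_toSubgraph, Walk.edgeSet_toSubgraph] at hgen
  obtain ⟨U, hU⟩ := hgen hB v hvB hvZ x hxB hxZ (ht ▸ Set.subsingleton_singleton)
  exact ⟨U.toFinset, by simpa [Set.indicator_apply, Walk.edgeSet] using hU⟩
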